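/- Let (s,x̄) ∈ I × U with x̄ = x(s,t(s,x̄)), δ(s,t(s,x̄)) = 0, and [x_t(s,t(s,x̄)), c(s,t(s,x̄))] ≠ 0. Then G_sss(s,x̄) = (1 + t_s(s,x̄)²)·∂/∂s(δ(s,t(s,x̄))), where ∂/∂s(δ(s,t(s,x̄))) = δ_s + δ_t·t_s evaluated at (s,t(s,x̄)). In particular, at such a point G_sss(s,x̄) = 0 if and only if ∂/∂s(δ(s,t(s,x̄))) = 0. -/

import Mathlib

noncomputable section

/-- `det2 u v` is the determinant of the 2×2 matrix with columns `u` and `v`. -/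
def det2 (u v : ℝ × ℝ) : ℝ := u.1 * v.2 - u.2 * v.1

/-- Partial derivative with respect to the first coordinate `s`. -/
def pds (f : ℝ × ℝ → ℝ) (p : ℝ × ℝ) : ℝ := fderiv ℝ f p (1, 0)

/-- Partial derivative with respect to the second coordinate `t`. -/
def pdt (f : ℝ × ℝ → ℝ) (p : ℝ × ℝ) : ℝ := fderiv ℝ f p (0, 1)

/-- The planar map `x = (A, B)`. -/
def xmap (A B : ℝ × ℝ → ℝ) (p : ℝ × ℝ) : ℝ × ℝ := (A p, B p)

/-- The conjugate map `c = (-D, C)`. -/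
def cmap (C D : ℝ × ℝ → ℝ) (p : ℝ × ℝ) : ℝ × ℝ := (-D p, C p)

/-- `x_s = (A_s, B_s)`. -/
def xs (A B : ℝ × ℝ → ℝ) (p : ℝ × ℝ) : ℝ × ℝ := (pds A p, pds B p)

/-- `x_t = (A_t, B_t)`. -/
def xt (A B : ℝ × ℝ → ℝ) (p : ℝ × ℝ) : ℝ × ℝ := (pdt A p, pdt B p)

/-- `δ = A_s B_t - A_t B_s = [x_s, x_t]`. -/
def deltaMap (A B : ℝ × ℝ → ℝ) (p : ℝ × ℝ) : ℝ :=
  pds A p * pdt B p - pdt A p * pds B p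

theorem aux_contDiffOn_dir {Ω : Set (ℝ × ℝ)} (hΩ : IsOpen Ω) {f : ℝ × ℝ → ℝ}
    (hf : ContDiffOn ℝ (⊤ : ℕ∞) f Ω) (v : ℝ × ℝ) :
    ContDiffOn ℝ (⊤ : ℕ∞) (fun p => fderiv ℝ f p v) Ω :=
  (hf.fderiv_of_isOpen hΩ (by simp)).clm_apply contDiffOn_const

theorem aux_deriv_smooth {I : Set ℝ} (hI : IsOpen I) {f : ℝ → ℝ}
    (hf : ContDiffOn ℝ (⊤ : ℕ∞) f I) : ContDiffOn ℝ (⊤ : ℕ∞) (deriv f) I :=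
  hf.deriv_of_isOpen hI (by simp)

theorem aux_hasDeriv {I : Set ℝ} (hI : IsOpen I) {f : ℝ → ℝ}
    (hf : ContDiffOn ℝ (⊤ : ℕ∞) f I) {r : ℝ} (hr : r ∈ I) : HasDerivAt f (deriv f r) r :=
  ((hf.differentiableOn (by simp)).differentiableAt (hI.mem_nhds hr)).hasDerivAt

theorem aux_chain {Ω : Set (ℝ × ℝ)} (hΩ : IsOpen Ω) {f : ℝ × ℝ → ℝ}
    (hf : ContDiffOn ℝ (⊤ : ℕ∞) f Ω) {τ : ℝ → ℝ} {τ' r : ℝ} (hτ : HasDerivAt τ τ' r)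
    (hm : (r, τ r) ∈ Ω) :
    HasDerivAt (fun r => f (r, τ r)) (pds f (r, τ r) + pdt f (r, τ r) * τ') r := by
  have h1 : HasFDerivAt f (fderiv ℝ f (r, τ r)) (r, τ r) :=
    ((hf.differentiableOn (by simp)).differentiableAt (hΩ.mem_nhds hm)).hasFDerivAt
  have h2 : HasDerivAt (fun r => (r, τ r)) ((1 : ℝ), τ') r := (hasDerivAt_id r).prodMk hτ
  have h3 := h1.comp_hasDerivAt r h2
  have h4 : ((1 : ℝ), τ') = (1, 0) + τ' • ((0 : ℝ), (1 : ℝ)) := by ext <;> simp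
  rw [h4, map_add, map_smul, smul_eq_mul, mul_comm] at h3
  exact h3

theorem Gsss_formula
    (Ω : Set (ℝ × ℝ)) (hΩ : IsOpen Ω)
    (A B C D : ℝ × ℝ → ℝ)
    (hA : ContDiffOn ℝ (⊤ : ℕ∞) A Ω) (hB : ContDiffOn ℝ (⊤ : ℕ∞) B Ω)
    (hC : ContDiffOn ℝ (⊤ : ℕ∞) C Ω) (hD : ContDiffOn ℝ (⊤ : ℕ∞) D Ω)
    (hCR1 : ∀ p ∈ Ω, pds A p = - pdt D p)
    (hCR2 : ∀ p ∈ Ω, pdt A p = pds D p)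
    (hCR3 : ∀ p ∈ Ω, pds B p = pdt C p)
    (hCR4 : ∀ p ∈ Ω, pdt B p = - pds C p)
    (g : ℝ × ℝ → ℝ) (hg : ContDiffOn ℝ (⊤ : ℕ∞) g Ω)
    (hgs : ∀ p ∈ Ω, pds g p = det2 (xs A B p) (cmap C D p))
    (hgt : ∀ p ∈ Ω, pdt g p = det2 (xt A B p) (cmap C D p))
    (s₀ t₀ : ℝ) (hst₀ : (s₀, t₀) ∈ Ω)
    (hne₀ : det2 (xt A B (s₀, t₀)) (cmap C D (s₀, t₀)) ≠ 0)
    (I : Set ℝ) (U : Set (ℝ × ℝ)) (hI : IsOpen I) (hU : IsOpen U)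
    (hs₀ : s₀ ∈ I) (hx₀ : xmap A B (s₀, t₀) ∈ U)
    (T : ℝ → ℝ × ℝ → ℝ)
    (hT : ContDiffOn ℝ (⊤ : ℕ∞) (fun q : ℝ × (ℝ × ℝ) => T q.1 q.2) (I ×ˢ U))
    (hT₀ : T s₀ (xmap A B (s₀, t₀)) = t₀)
    (hTmem : ∀ s ∈ I, ∀ xb ∈ U, (s, T s xb) ∈ Ω)
    (hTeq : ∀ s ∈ I, ∀ xb ∈ U,
      det2 (xb - xmap A B (s, T s xb)) (cmap C D (s, T s xb)) = 0)
    (s : ℝ) (xb : ℝ × ℝ) (hs : s ∈ I) (hxb : xb ∈ U)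
    (hx : xb = xmap A B (s, T s xb))
    (hδ : deltaMap A B (s, T s xb) = 0)
    (hne : det2 (xt A B (s, T s xb)) (cmap C D (s, T s xb)) ≠ 0)
    :
    deriv (deriv (deriv (fun s' => g (s', T s' xb)))) s
        = (1 + (deriv (fun s' => T s' xb) s) ^ 2)
            * deriv (fun s' => deltaMap A B (s', T s' xb)) s ∧
    deriv (fun s' => deltaMap A B (s', T s' xb)) s
        = pds (deltaMap A B) (s, T s xb)
            + pdt (deltaMap A B) (s, T s xb) * deriv (fun s' => T s' xb) s ∧
    (deriv (deriv (deriv (fun s' => g (s', T s' xb)))) s = 0 ↔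
      deriv (fun s' => deltaMap A B (s', T s' xb)) s = 0) := by
  have hτ : ContDiffOn ℝ (⊤ : ℕ∞) (fun r => T r xb) I := by
    refine hT.comp (f := fun r : ℝ => (r, xb)) ?_ (fun r hr => ⟨hr, hxb⟩)
    exact (contDiff_id.prodMk contDiff_const).contDiffOn
  have hTe : ∀ r ∈ I, det2 (xb - xmap A B (r, T r xb)) (cmap C D (r, T r xb)) = 0 :=
    fun r hr => hTeq r hr xb hxb
  have hm : ∀ r ∈ I, (r, T r xb) ∈ Ω := fun r hr => hTmem r hr xb hxb
  clear hTeq hTmem hT hT₀ hx₀ hs₀ hst₀ hne₀ t₀ s₀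
  obtain ⟨x1, x2⟩ := xb
  set τ : ℝ → ℝ := fun r => T r (x1, x2) with hτdef
  have hm' : ∀ r ∈ I, (r, τ r) ∈ Ω := hm
  have hcomp : ∀ f : ℝ × ℝ → ℝ, ContDiffOn ℝ (⊤ : ℕ∞) f Ω →
      ContDiffOn ℝ (⊤ : ℕ∞) (fun r => f (r, τ r)) I := fun f hf =>
    hf.comp (f := fun r => (r, τ r)) (contDiffOn_id.prodMk hτ) hm'
  have hτ1 := aux_deriv_smooth hI hτ
  have hτd : ∀ r ∈ I, HasDerivAt τ (deriv τ r) r := fun r hr => aux_hasDeriv hI hτ hr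
  have hch : ∀ f : ℝ × ℝ → ℝ, ContDiffOn ℝ (⊤ : ℕ∞) f Ω → ∀ r ∈ I,
      HasDerivAt (fun r => f (r, τ r)) (pds f (r, τ r) + pdt f (r, τ r) * deriv τ r) r :=
    fun f hf r hr => aux_chain hΩ hf (hτd r hr) (hm' r hr)
  have hAs : ContDiffOn ℝ (⊤ : ℕ∞) (pds A) Ω := aux_contDiffOn_dir hΩ hA _
  have hAt : ContDiffOn ℝ (⊤ : ℕ∞) (pdt A) Ω := aux_contDiffOn_dir hΩ hA _
  have hBs : ContDiffOn ℝ (⊤ : ℕ∞) (pds B) Ω := aux_contDiffOn_dir hΩ hB _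
  have hBt : ContDiffOn ℝ (⊤ : ℕ∞) (pdt B) Ω := aux_contDiffOn_dir hΩ hB _
  have hΔ : ContDiffOn ℝ (⊤ : ℕ∞) (deltaMap A B) Ω := (hAs.mul hBt).sub (hAt.mul hBs)
  -- derivative of the second and first components of `c` along the curve
  set W : ℝ → ℝ := fun r => -pdt B (r, τ r) + pds B (r, τ r) * deriv τ r with hW
  set V : ℝ → ℝ := fun r => -pdt A (r, τ r) + pds A (r, τ r) * deriv τ r with hV
  have hWs : ContDiffOn ℝ (⊤ : ℕ∞) W I := (hcomp _ hBt).neg.add ((hcomp _ hBs).mul hτ1)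
  have hVs : ContDiffOn ℝ (⊤ : ℕ∞) V I := (hcomp _ hAt).neg.add ((hcomp _ hAs).mul hτ1)
  have hCd : ∀ r ∈ I, HasDerivAt (fun r => C (r, τ r)) (W r) r := by
    intro r hr
    convert hch C hC r hr using 1
    simp only [hW, hCR3 _ (hm' r hr), hCR4 _ (hm' r hr)]; ring
  have hDd : ∀ r ∈ I, HasDerivAt (fun r => D (r, τ r)) (-V r) r := by
    intro r hr
    convert hch D hD r hr using 1
    simp only [hV, hCR1 _ (hm' r hr), hCR2 _ (hm' r hr)]; ring
  have hG1 : ∀ r ∈ I, deriv (fun r => g (r, τ r)) r =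
      -((A (r, τ r) - x1) * W r - (B (r, τ r) - x2) * V r) := by
    intro r hr
    rw [(hch g hg r hr).deriv, hgs _ (hm' r hr), hgt _ (hm' r hr)]
    have e : (fun r => (x1 - A (r, τ r)) * C (r, τ r) - (x2 - B (r, τ r)) * (-D (r, τ r)))
        =ᶠ[nhds r] fun _ => (0 : ℝ) := by
      filter_upwards [hI.mem_nhds hr] with q hq
      exact hTe q hq
    have e1 := e.deriv_eq
    have e2 := ((((hch A hA r hr).const_sub x1).mul (hCd r hr)).sub
      (((hch B hB r hr).const_sub x2).mul (hDd r hr).neg)).deriv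
    have e3 := e2.symm.trans (e1.trans (deriv_const r (0 : ℝ)))
    simp only [det2, xs, xt, cmap]
    simp only [Pi.neg_apply] at e3
    linarith
  have hG2 : ∀ r ∈ I, deriv (deriv (fun r => g (r, τ r))) r =
      (1 + deriv τ r ^ 2) * deltaMap A B (r, τ r)
        - ((A (r, τ r) - x1) * deriv W r - (B (r, τ r) - x2) * deriv V r) := by
    intro r hr
    have e : deriv (fun r => g (r, τ r)) =ᶠ[nhds r]
        fun r => -((A (r, τ r) - x1) * W r - (B (r, τ r) - x2) * V r) := by
      filter_upwards [hI.mem_nhds hr] with q hq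
      exact hG1 q hq
    rw [e.deriv_eq]
    have e2 := ((((hch A hA r hr).sub_const x1).mul (aux_hasDeriv hI hWs hr)).sub
      (((hch B hB r hr).sub_const x2).mul (aux_hasDeriv hI hVs hr))).neg.deriv
    refine Eq.trans e2 ?_
    simp only [hW, hV, deltaMap]
    ring
  have hxA : A (s, τ s) - x1 = 0 := by
    have := congrArg Prod.fst hx
    exact sub_eq_zero.2 this.symm
  have hxB : B (s, τ s) - x2 = 0 := by
    have := congrArg Prod.snd hx
    exact sub_eq_zero.2 this.symm
  have hδ' : deltaMap A B (s, τ s) = 0 := hδ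
  have hne' : det2 (xt A B (s, τ s)) (cmap C D (s, τ s)) ≠ 0 := hne
  have hz := hG1 s hs
  rw [(hch g hg s hs).deriv, hgs _ (hm' s hs), hgt _ (hm' s hs), hxA, hxB] at hz
  simp only [det2, xs, xt, cmap] at hz hne'
  have hδ2 := hδ'
  simp only [deltaMap] at hδ2
  have ha0 : pds A (s, τ s) + pdt A (s, τ s) * deriv τ s = 0 := by
    refine (mul_eq_zero.1 ?_).resolve_right hne'
    linear_combination pdt A (s, τ s) * hz + D (s, τ s) * hδ2
  have hb0 : pds B (s, τ s) + pdt B (s, τ s) * deriv τ s = 0 := by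
    refine (mul_eq_zero.1 ?_).resolve_right hne'
    linear_combination pdt B (s, τ s) * hz - C (s, τ s) * hδ2
  have hΔd := hch _ hΔ s hs
  have hG3 : deriv (deriv (deriv (fun r => g (r, τ r)))) s =
      (1 + deriv τ s ^ 2) * deriv (fun r => deltaMap A B (r, τ r)) s := by
    have e : deriv (deriv (fun r => g (r, τ r))) =ᶠ[nhds s]
        fun r => (1 + deriv τ r ^ 2) * deltaMap A B (r, τ r)
        - ((A (r, τ r) - x1) * deriv W r - (B (r, τ r) - x2) * deriv V r) := by
      filter_upwards [hI.mem_nhds hs] with q hq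
      exact hG2 q hq
    rw [e.deriv_eq]
    have e2 := (((((aux_hasDeriv hI hτ1 hs).pow 2).const_add 1).mul hΔd).sub
      ((((hch A hA s hs).sub_const x1).mul (aux_hasDeriv hI (aux_deriv_smooth hI hWs) hs)).sub
      (((hch B hB s hs).sub_const x2).mul
        (aux_hasDeriv hI (aux_deriv_smooth hI hVs) hs)))).deriv
    refine Eq.trans e2 ?_
    rw [hΔd.deriv]
    simp only [hxA, hxB, ha0, hb0, hδ', Pi.pow_apply]
    ring
  refine ⟨hG3, hΔd.deriv, ?_⟩
  have hpos : (1 + deriv τ s ^ 2) ≠ 0 := by positivity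
  constructor
  · intro h
    exact (mul_eq_zero.1 (hG3.symm.trans h)).resolve_left hpos
  · intro h
    refine hG3.trans ?_
    exact mul_eq_zero_of_right _ h
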